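/- Suppose n is even, and let M2 be a matching of maximum weight among all matchings of size n/2 in G. Then there exists a perfect 3-path packing P of G with w(P) ≥ (2/3)·w(M2) + (1/2)·OPT − (1/2)·Σ_{xyz ∈ P*} max{w(xy), w(yz)}; consequently w(P) ≥ (7/12)·OPT. -/

import Mathlib

open Finset
open scoped Classical

namespace MW3PP

/-- A 3-path `xyz`: a path on three distinct vertices with middle vertex `y`. -/
structure P3 (V : Type*) where
  x : V
  y : V
  z : V
  hxy : x ≠ y
  hyz : y ≠ z
  hxz : x ≠ z

variable {V : Type*} [Fintype V] [DecidableEq V]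

/-- The vertex set of a 3-path. -/
def P3.verts (p : P3 V) : Finset V := {p.x, p.y, p.z}

/-- The two edges of a 3-path. -/
def P3.edges (p : P3 V) : Finset (Sym2 V) := {s(p.x, p.y), s(p.y, p.z)}

/-- The weight of a 3-path. -/
def P3.wt (w : Sym2 V → ℝ) (p : P3 V) : ℝ := w s(p.x, p.y) + w s(p.y, p.z)

/-- The total weight of a set of edges. -/
def ew (w : Sym2 V → ℝ) (F : Finset (Sym2 V)) : ℝ := ∑ e ∈ F, w e

/-- The total weight of a set of 3-paths. -/
def pw (w : Sym2 V → ℝ) (P : Finset (P3 V)) : ℝ := ∑ p ∈ P, p.wt w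

/-- `∑_{xyz ∈ S} max (w (xy)) (w (yz))`. -/
def maxSum (w : Sym2 V → ℝ) (S : Finset (P3 V)) : ℝ :=
  ∑ p ∈ S, max (w s(p.x, p.y)) (w s(p.y, p.z))

/-- A perfect 3-path packing: `n/3` pairwise vertex-disjoint 3-paths covering all vertices. -/
def IsPacking (P : Finset (P3 V)) : Prop :=
  P.card = Fintype.card V / 3 ∧
  (∀ p ∈ P, ∀ q ∈ P, p ≠ q → Disjoint p.verts q.verts) ∧
  (∀ v : V, ∃ p ∈ P, v ∈ p.verts)

/-- A maximum-weight perfect 3-path packing. -/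
def IsMaxPacking (w : Sym2 V → ℝ) (P : Finset (P3 V)) : Prop :=
  IsPacking P ∧ ∀ Q : Finset (P3 V), IsPacking Q → pw w Q ≤ pw w P

/-- A matching: a set of pairwise vertex-disjoint (non-loop) edges. -/
def IsMatching (M : Finset (Sym2 V)) : Prop :=
  (∀ e ∈ M, ¬ e.IsDiag) ∧
  ∀ e ∈ M, ∀ f ∈ M, e ≠ f → ∀ v : V, v ∈ e → v ∉ f

/-- A maximum-weight matching among all matchings of size `k`. -/
def IsMaxMatchingOfSize (w : Sym2 V → ℝ) (k : ℕ) (M : Finset (Sym2 V)) : Prop :=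
  IsMatching M ∧ M.card = k ∧
  ∀ M' : Finset (Sym2 V), IsMatching M' → M'.card = k → ew w M' ≤ ew w M

/-- `v ∈ V(M)` : vertex `v` is covered by the matching `M`. -/
def covered (M : Finset (Sym2 V)) (v : V) : Prop := ∃ e ∈ M, v ∈ e

/-- `e_u` : the edge of `M` containing `u` (junk value if there is none). -/
noncomputable def eMatch (M : Finset (Sym2 V)) (u : V) : Sym2 V :=
  if h : ∃ e ∈ M, u ∈ e then h.choose else s(u, u)

/-- The cost `c` of an edge with respect to a matching `M`:
`c(uv) = w(uv) - min (w (e_u)) (w (e_v))` if both endpoints are covered by `M`,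
and `c(uv) = w(uv)` otherwise. -/
noncomputable def cost (w : Sym2 V → ℝ) (M : Finset (Sym2 V)) : Sym2 V → ℝ :=
  Sym2.lift ⟨fun u v =>
    if covered M u ∧ covered M v then
      w s(u, v) - min (w (eMatch M u)) (w (eMatch M v))
    else w s(u, v), by
      intro u v
      dsimp only
      by_cases h : covered M u ∧ covered M v
      · rw [if_pos h, if_pos (show covered M v ∧ covered M u from ⟨h.2, h.1⟩),
          Sym2.eq_swap, min_comm]
      · rw [if_neg h, if_neg (show ¬(covered M v ∧ covered M u) from fun h' => h ⟨h'.2, h'.1⟩),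
          Sym2.eq_swap]⟩

/-- The total cost of a set of edges. -/
noncomputable def cw (w : Sym2 V → ℝ) (M F : Finset (Sym2 V)) : ℝ := ∑ e ∈ F, cost w M e

/-- The number of vertices of the 3-path `p` covered by `M`. -/
noncomputable def kcnt (M : Finset (Sym2 V)) (p : P3 V) : ℕ :=
  (p.verts.filter fun v => covered M v).card

/-- Exactly one of the two edges of `p` lies in `M`. -/
def exOne (M : Finset (Sym2 V)) (p : P3 V) : Prop :=
  (s(p.x, p.y) ∈ M ∧ s(p.y, p.z) ∉ M) ∨ (s(p.x, p.y) ∉ M ∧ s(p.y, p.z) ∈ M)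

def cls1 (M : Finset (Sym2 V)) (p : P3 V) : Prop := kcnt M p = 0
def cls2 (M : Finset (Sym2 V)) (p : P3 V) : Prop := kcnt M p = 1 ∧ ¬ covered M p.y
def cls3 (M : Finset (Sym2 V)) (p : P3 V) : Prop := kcnt M p = 1 ∧ covered M p.y
def cls4 (M : Finset (Sym2 V)) (p : P3 V) : Prop := kcnt M p = 2 ∧ ¬ covered M p.y
def cls5 (M : Finset (Sym2 V)) (p : P3 V) : Prop := kcnt M p = 2 ∧ covered M p.y ∧ exOne M p
def cls6 (M : Finset (Sym2 V)) (p : P3 V) : Prop :=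
  kcnt M p = 2 ∧ covered M p.y ∧ s(p.x, p.y) ∉ M ∧ s(p.y, p.z) ∉ M
def cls7 (M : Finset (Sym2 V)) (p : P3 V) : Prop := kcnt M p = 3 ∧ exOne M p
def cls8 (M : Finset (Sym2 V)) (p : P3 V) : Prop :=
  kcnt M p = 3 ∧ s(p.x, p.y) ∉ M ∧ s(p.y, p.z) ∉ M

/-- The subset of a set of 3-paths satisfying a predicate. -/
noncomputable def psel (P : Finset (P3 V)) (c : P3 V → Prop) : Finset (P3 V) := P.filter c

/-- The set of all edges of the 3-paths in `S`. -/
def Esub (S : Finset (P3 V)) : Finset (Sym2 V) := S.biUnion P3.edges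

/-- The heaviest edge of a 3-path (the edge `xy` in case of a tie). -/
noncomputable def heavy (w : Sym2 V → ℝ) (p : P3 V) : Sym2 V :=
  if w s(p.y, p.z) ≤ w s(p.x, p.y) then s(p.x, p.y) else s(p.y, p.z)

noncomputable def X1 (w : Sym2 V → ℝ) (P : Finset (P3 V)) (M : Finset (Sym2 V)) :
    Finset (Sym2 V) := (psel P (cls1 M)).image (heavy w)
noncomputable def X2 (P : Finset (P3 V)) (M : Finset (Sym2 V)) : Finset (Sym2 V) :=
  (psel P (cls2 M)).image fun p => if covered M p.x then s(p.x, p.y) else s(p.y, p.z)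
noncomputable def X3 (w : Sym2 V → ℝ) (P : Finset (P3 V)) (M : Finset (Sym2 V)) :
    Finset (Sym2 V) := (psel P (cls3 M)).image (heavy w)
noncomputable def X4 (w : Sym2 V → ℝ) (P : Finset (P3 V)) (M : Finset (Sym2 V)) :
    Finset (Sym2 V) := (psel P (cls4 M)).image (heavy w)
noncomputable def X5 (P : Finset (P3 V)) (M : Finset (Sym2 V)) : Finset (Sym2 V) :=
  (psel P (cls5 M)).image fun p => if s(p.x, p.y) ∈ M then s(p.y, p.z) else s(p.x, p.y)
noncomputable def X6 (P : Finset (P3 V)) (M : Finset (Sym2 V)) : Finset (Sym2 V) :=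
  (psel P (cls6 M)).image fun p => if covered M p.x then s(p.y, p.z) else s(p.x, p.y)
noncomputable def X7 (P : Finset (P3 V)) (M : Finset (Sym2 V)) : Finset (Sym2 V) :=
  (psel P (cls7 M)).image fun p => if s(p.x, p.y) ∈ M then s(p.y, p.z) else s(p.x, p.y)
noncomputable def X8 (w : Sym2 V → ℝ) (P : Finset (P3 V)) (M : Finset (Sym2 V)) :
    Finset (Sym2 V) := (psel P (cls8 M)).image (heavy w)

noncomputable def Y1 (w : Sym2 V → ℝ) (P : Finset (P3 V)) (M : Finset (Sym2 V)) :
    Finset (Sym2 V) := Esub (psel P (cls1 M)) \ X1 w P M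
noncomputable def Y2 (P : Finset (P3 V)) (M : Finset (Sym2 V)) : Finset (Sym2 V) :=
  Esub (psel P (cls2 M)) \ X2 P M
noncomputable def Y3 (w : Sym2 V → ℝ) (P : Finset (P3 V)) (M : Finset (Sym2 V)) :
    Finset (Sym2 V) := Esub (psel P (cls3 M)) \ X3 w P M
noncomputable def Y4 (w : Sym2 V → ℝ) (P : Finset (P3 V)) (M : Finset (Sym2 V)) :
    Finset (Sym2 V) := Esub (psel P (cls4 M)) \ X4 w P M
noncomputable def Y5 (P : Finset (P3 V)) (M : Finset (Sym2 V)) : Finset (Sym2 V) :=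
  Esub (psel P (cls5 M)) \ X5 P M
noncomputable def Y6 (P : Finset (P3 V)) (M : Finset (Sym2 V)) : Finset (Sym2 V) :=
  Esub (psel P (cls6 M)) \ X6 P M
noncomputable def Y7 (P : Finset (P3 V)) (M : Finset (Sym2 V)) : Finset (Sym2 V) :=
  Esub (psel P (cls7 M)) \ X7 P M
noncomputable def Y8 (w : Sym2 V → ℝ) (P : Finset (P3 V)) (M : Finset (Sym2 V)) :
    Finset (Sym2 V) := Esub (psel P (cls8 M)) \ X8 w P M

/-- An edge is a middle edge (w.r.t. `M`) if exactly one of its endpoints lies in `V(M)`. -/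
def isMiddle (M : Finset (Sym2 V)) (e : Sym2 V) : Prop :=
  ∃ u v : V, e = s(u, v) ∧ covered M u ∧ ¬ covered M v

/-- Two edges share a vertex. -/
def shares (e f : Sym2 V) : Prop := ∃ v, v ∈ e ∧ v ∈ f

/-- `g` is a middle edge of some 3-path in `S`. -/
def middleIn (M : Finset (Sym2 V)) (S : Finset (P3 V)) (g : Sym2 V) : Prop :=
  (∃ p ∈ S, g ∈ p.edges) ∧ isMiddle M g

/-- The 3-paths of `P` lying in classes 2, 3 or 4. -/
noncomputable def P234 (P : Finset (P3 V)) (M : Finset (Sym2 V)) : Finset (P3 V) :=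
  psel P fun p => cls2 M p ∨ cls3 M p ∨ cls4 M p

/-- `M_1`: edges of `M` sharing a vertex with at least one middle edge of a 3-path of `P*_6`. -/
noncomputable def Mset1 (P : Finset (P3 V)) (M : Finset (Sym2 V)) : Finset (Sym2 V) :=
  M.filter fun f => ∃ g, middleIn M (psel P (cls6 M)) g ∧ shares f g

/-- `M_2`: edges of `M` sharing a vertex with at least one middle edge, all middle edges met
belonging to 3-paths of `P*_2 ∪ P*_3 ∪ P*_4`. -/
noncomputable def Mset2 (P : Finset (P3 V)) (M : Finset (Sym2 V)) : Finset (Sym2 V) :=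
  M.filter fun f =>
    (∃ g, middleIn M P g ∧ shares f g) ∧
    ∀ g, middleIn M P g → shares f g → middleIn M (P234 P M) g

/-- `M_3 = M ∩ E(P*_7)`. -/
noncomputable def Mset3 (P : Finset (P3 V)) (M : Finset (Sym2 V)) : Finset (Sym2 V) :=
  M ∩ Esub (psel P (cls7 M))

/-- `M_4 = M ∩ E(P*_5)`. -/
noncomputable def Mset4 (P : Finset (P3 V)) (M : Finset (Sym2 V)) : Finset (Sym2 V) :=
  M ∩ Esub (psel P (cls5 M))

/-- The middle edges of 3-paths of `P*_6`. -/
noncomputable def mid6 (P : Finset (P3 V)) (M : Finset (Sym2 V)) : Finset (Sym2 V) :=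
  (Esub (psel P (cls6 M))).filter (isMiddle M)

/-- `M'_1`: edges of `M_1` meeting exactly one middle edge of a 3-path of `P*_6` and
no middle edge of a 3-path of `P*_2 ∪ P*_3 ∪ P*_4`. -/
noncomputable def Mset1' (P : Finset (P3 V)) (M : Finset (Sym2 V)) : Finset (Sym2 V) :=
  (Mset1 P M).filter fun f =>
    ((mid6 P M).filter fun g => shares f g).card = 1 ∧
    ∀ g, middleIn M (P234 P M) g → ¬ shares f g

/-- `M''_1`: edges of `M_1` meeting two middle edges of 3-paths of `P*_6`. -/
noncomputable def Mset1'' (P : Finset (P3 V)) (M : Finset (Sym2 V)) : Finset (Sym2 V) :=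
  (Mset1 P M).filter fun f => ((mid6 P M).filter fun g => shares f g).card = 2

/-- `M'''_1`: edges of `M_1` meeting exactly one middle edge of a 3-path of `P*_6` and
at least one middle edge of a 3-path of `P*_2 ∪ P*_3 ∪ P*_4`. -/
noncomputable def Mset1''' (P : Finset (P3 V)) (M : Finset (Sym2 V)) : Finset (Sym2 V) :=
  (Mset1 P M).filter fun f =>
    ((mid6 P M).filter fun g => shares f g).card = 1 ∧
    ∃ g, middleIn M (P234 P M) g ∧ shares f g

/-- Assumption on `P*`: for every 3-path `xyz ∈ P*` with `y ∉ V(M)` and `x, z ∈ V(M)`,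
the vertices `x` and `z` lie in two distinct edges of `M`. -/
def Ass (P : Finset (P3 V)) (M : Finset (Sym2 V)) : Prop :=
  ∀ p ∈ P, ¬ covered M p.y → covered M p.x → covered M p.z →
    ∃ e ∈ M, ∃ f ∈ M, p.x ∈ e ∧ p.z ∈ f ∧ e ≠ f

/-- An admissible edge w.r.t. `M`: either both endpoints are in `V(M)` and lie in two distinct
edges of `M`, or exactly one endpoint is in `V(M)`. -/
def goodEdge (M : Finset (Sym2 V)) (e : Sym2 V) : Prop :=
  (∃ u v : V, e = s(u, v) ∧ covered M u ∧ covered M v ∧ ∀ f ∈ M, ¬(u ∈ f ∧ v ∈ f)) ∨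
  (∃ u v : V, e = s(u, v) ∧ covered M u ∧ ¬ covered M v)


section Lists

variable {α : Type*}

/-- The total weight of the edges joining consecutive entries of a list. -/
def walkWt (w : Sym2 α → ℝ) : List α → ℝ
  | [] => 0
  | [_] => 0
  | a :: b :: l => w s(a, b) + walkWt w (b :: l)

/-- The total weight of the 3-paths obtained by cutting a list into consecutive triples. -/
def tripleWt (w : Sym2 α → ℝ) : List α → ℝ
  | a :: b :: c :: l => w s(a, b) + w s(b, c) + tripleWt w l
  | _ => 0

/-- `v` is the first or the last entry of the list `A`. -/
def IsEnd (v : α) (A : List α) : Prop := A.head? = some v ∨ A.getLast? = some v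

lemma walkWt_append_cons_cons (w : Sym2 α → ℝ) (u v : α) (A B : List α) :
    walkWt w (A ++ u :: v :: B) = walkWt w (A ++ [u]) + w s(u, v) + walkWt w (v :: B) := by
  induction A with
  | nil => simp [walkWt]
  | cons a A ih =>
    cases A with
    | nil => simp [walkWt]; ring
    | cons b A => simp only [List.cons_append, walkWt] at ih ⊢; rw [ih]; ring

lemma walkWt_reverse (w : Sym2 α → ℝ) (A : List α) : walkWt w A.reverse = walkWt w A := by
  induction A with
  | nil => rfl
  | cons a A ih =>
    cases A with
    | nil => rfl
    | cons b A =>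
      have h : (a :: b :: A).reverse = A.reverse ++ b :: a :: [] := by simp
      rw [h, walkWt_append_cons_cons, ← List.reverse_cons, ih, Sym2.eq_swap]
      simp [walkWt]; ring

lemma walkWt_nonneg {w : Sym2 α → ℝ} (hw : ∀ e, 0 ≤ w e) (A : List α) : 0 ≤ walkWt w A := by
  induction A with
  | nil => exact le_rfl
  | cons a A ih =>
    cases A with
    | nil => exact le_rfl
    | cons b A => exact add_nonneg (hw _) ih

lemma walkWt_add_le_append {w : Sym2 α → ℝ} (hw : ∀ e, 0 ≤ w e) (A B : List α) :
    walkWt w A + walkWt w B ≤ walkWt w (A ++ B) := by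
  rcases A.eq_nil_or_concat with rfl | ⟨A, u, rfl⟩
  · simp [walkWt]
  · cases B with
    | nil => simp [walkWt]
    | cons v B =>
      have := walkWt_append_cons_cons w u v A B
      simp only [List.concat_eq_append, List.append_assoc, List.cons_append, List.nil_append]
      linarith [hw s(u, v)]

lemma sum_walkWt_le_flatten {w : Sym2 α → ℝ} (hw : ∀ e, 0 ≤ w e) (L : List (List α)) :
    (L.map (walkWt w)).sum ≤ walkWt w L.flatten := by
  induction L with
  | nil => exact le_rfl
  | cons A L ih =>
    simp only [List.map_cons, List.sum_cons, List.flatten_cons]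
    linarith [walkWt_add_le_append hw A L.flatten]

lemma IsEnd.mem {v : α} {A : List α} (h : IsEnd v A) : v ∈ A :=
  h.elim List.mem_of_head? List.mem_of_getLast?

lemma isEnd_reverse {v : α} {A : List α} : IsEnd v A.reverse ↔ IsEnd v A := by
  simp [IsEnd, or_comm]

/-- A list can be reversed, if necessary, so that a given end becomes its last entry. -/
lemma IsEnd.exists_perm_concat {v : α} {A : List α} (h : IsEnd v A) (w : Sym2 α → ℝ) :
    ∃ B : List α, (B ++ [v]).Perm A ∧ walkWt w (B ++ [v]) = walkWt w A ∧
      ∀ t, IsEnd t A → IsEnd t (B ++ [v]) := by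
  rcases h with h | h
  · obtain ⟨B, rfl⟩ := List.head?_eq_some_iff.1 h
    refine ⟨B.reverse, ?_, ?_, ?_⟩
    · rw [← List.reverse_cons]; exact List.reverse_perm _
    · rw [← List.reverse_cons, walkWt_reverse]
    · intro t ht; rw [← List.reverse_cons]; exact isEnd_reverse.2 ht
  · obtain ⟨B, rfl⟩ := List.getLast?_eq_some_iff.1 h
    exact ⟨B, List.Perm.refl _, rfl, fun _ => id⟩

/-- Two lists can be joined at given ends into one, all other ends staying ends. -/
lemma exists_join (w : Sym2 α → ℝ) {u v : α} {A B : List α} (hu : IsEnd u A) (hv : IsEnd v B) :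
    ∃ C : List α, C.Perm (A ++ B) ∧ walkWt w C = walkWt w A + walkWt w B + w s(u, v) ∧
      ∀ t, t ≠ u → t ≠ v → IsEnd t A ∨ IsEnd t B → IsEnd t C := by
  obtain ⟨A', hA, hwA, heA⟩ := hu.exists_perm_concat w
  obtain ⟨B', hB, hwB, heB⟩ := hv.exists_perm_concat w
  have hrev : (B' ++ [v]).reverse = v :: B'.reverse := by simp
  refine ⟨(A' ++ [u]) ++ (B' ++ [v]).reverse, hA.append ((List.reverse_perm _).trans hB), ?_, ?_⟩
  · rw [hrev, List.append_assoc, List.singleton_append, walkWt_append_cons_cons, ← hrev,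
      walkWt_reverse, hwA, hwB]
    ring
  · rintro t htu htv (ht | ht)
    · rcases heA t ht with h | h
      · exact Or.inl (by rw [List.head?_append, h]; rfl)
      · simp at h; exact absurd h.symm htu
    · rcases heB t ht with h | h
      · refine Or.inr ?_
        rw [List.getLast?_append, List.getLast?_reverse, h]; rfl
      · simp at h; exact absurd h.symm htv

lemma exists_join_of_mem (w : Sym2 α → ℝ) {L : List (List α)} {u v : α} {A B : List α}
    (hA : A ∈ L) (hB : B ∈ L) (hAB : A ≠ B) (hu : IsEnd u A) (hv : IsEnd v B) :
    ∃ L' : List (List α), L'.flatten.Perm L.flatten ∧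
      (L'.map (walkWt w)).sum = (L.map (walkWt w)).sum + w s(u, v) ∧
      ∀ t, t ≠ u → t ≠ v → (∃ D ∈ L, IsEnd t D) → ∃ D ∈ L', IsEnd t D := by
  obtain ⟨L₁, hL₁⟩ : ∃ L₁, L.Perm (A :: B :: L₁) := by
    have hB' : B ∈ L.erase A := (List.mem_erase_of_ne hAB.symm).2 hB
    exact ⟨_, (List.perm_cons_erase hA).trans ((List.perm_cons_erase hB').cons A)⟩
  obtain ⟨C, hC, hwC, heC⟩ := exists_join w hu hv
  refine ⟨C :: L₁, ?_, ?_, ?_⟩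
  · refine List.Perm.trans ?_ hL₁.flatten.symm
    simpa using hC.append_right L₁.flatten
  · rw [(hL₁.map (walkWt w)).sum_eq]
    simp only [List.map_cons, List.sum_cons, hwC]; ring
  · rintro t htu htv ⟨D, hD, ht⟩
    rcases List.mem_cons.1 (hL₁.mem_iff.1 hD) with rfl | hD
    · exact ⟨C, List.mem_cons_self, heC t htu htv (Or.inl ht)⟩
    rcases List.mem_cons.1 hD with rfl | hD
    · exact ⟨C, List.mem_cons_self, heC t htu htv (Or.inr ht)⟩
    · exact ⟨D, List.mem_cons_of_mem _ hD, ht⟩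

/-- A list has at most two ends. -/
lemma IsEnd.eq_or_eq_or_eq {a b c : α} {A : List α} (ha : IsEnd a A) (hb : IsEnd b A)
    (hc : IsEnd c A) : a = b ∨ b = c ∨ a = c := by
  unfold IsEnd at *
  grind

/-- Cutting the cyclic sequence `l` into triples in the three possible ways omits every edge
exactly once; the cyclic closure is expressed by the two vertices `s`, `t` following `l`. -/
lemma two_mul_walkWt_le_tripleWt {w : Sym2 α → ℝ} (hw : ∀ e, 0 ≤ w e) (s t : α) (k : ℕ) :
    ∀ (a b c : α) (l : List α), l.length = 3 * k →
      2 * walkWt w (a :: b :: c :: l) - w s(a, b) + w s(s, t) ≤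
        tripleWt w (a :: b :: c :: l) + tripleWt w (b :: c :: (l ++ [s])) +
          tripleWt w (c :: (l ++ [s, t])) := by
  induction k with
  | zero =>
    intro a b c l hl
    obtain rfl := List.length_eq_zero_iff.1 (by simpa using hl)
    simp only [walkWt, tripleWt, List.nil_append]
    linarith [hw s(c, s)]
  | succ k ih =>
    intro a b c l hl
    match l, hl with
    | d :: e :: g :: l, hl =>
      have := ih d e g l (by simp at hl; omega)
      simp only [walkWt, tripleWt, List.cons_append] at this ⊢
      linarith

end Lists

omit [Fintype V] in
lemma exists_paths_of_list (w : Sym2 V → ℝ) (k : ℕ) :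
    ∀ l : List V, l.length = 3 * k → l.Nodup →
      ∃ P : Finset (P3 V), P.card = k ∧
        (∀ p ∈ P, ∀ q ∈ P, p ≠ q → Disjoint p.verts q.verts) ∧
        (∀ v, (∃ p ∈ P, v ∈ p.verts) ↔ v ∈ l) ∧ pw w P = tripleWt w l := by
  induction k with
  | zero =>
    intro l hl _
    obtain rfl := List.length_eq_zero_iff.1 (by simpa using hl)
    exact ⟨∅, by simp [pw, tripleWt]⟩
  | succ k ih =>
    intro l hl hn
    match l, hl, hn with
    | a :: b :: c :: l, hl, hn =>
      simp only [List.nodup_cons, List.mem_cons, not_or] at hn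
      obtain ⟨⟨hab, hac, hal⟩, ⟨hbc, hbl⟩, hcl, hn⟩ := hn
      obtain ⟨P, hc, hd, hv, hp⟩ := ih l (by simp at hl; omega) hn
      let p : P3 V := ⟨a, b, c, hab, hbc, hac⟩
      have hmem : ∀ v, v ∈ p.verts ↔ v = a ∨ v = b ∨ v = c := by
        intro v; simp [p, P3.verts]
      have hdis : ∀ q ∈ P, Disjoint p.verts q.verts := by
        intro q hq
        rw [Finset.disjoint_left]
        intro v hvp hvq
        have hvl := (hv v).1 ⟨q, hq, hvq⟩
        rcases (hmem v).1 hvp with rfl | rfl | rfl <;> contradiction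
      have hpP : p ∉ P := fun h => hal ((hv a).1 ⟨p, h, (hmem a).2 (Or.inl rfl)⟩)
      refine ⟨insert p P, by rw [Finset.card_insert_of_notMem hpP, hc], ?_, ?_, ?_⟩
      · intro q hq r hr hqr
        rcases Finset.mem_insert.1 hq with rfl | hq <;> rcases Finset.mem_insert.1 hr with rfl | hr
        · exact absurd rfl hqr
        · exact hdis r hr
        · exact (hdis q hq).symm
        · exact hd q hq r hr hqr
      · intro v
        simp only [Finset.mem_insert, exists_eq_or_imp, hmem, hv, List.mem_cons, or_assoc]
      · rw [pw, Finset.sum_insert hpP]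
        simp only [tripleWt, P3.wt, p, ← hp, pw]

lemma tripleWt_le_of_isMaxPacking {w : Sym2 V → ℝ} {P : Finset (P3 V)} (hP : IsMaxPacking w P)
    (h3 : 3 ∣ Fintype.card V) {l : List V} (hn : l.Nodup) (hl : ∀ v, v ∈ l) :
    tripleWt w l ≤ pw w P := by
  have hlen : l.length = Fintype.card V := by
    rw [← List.toFinset_card_of_nodup hn, ← Finset.card_univ]
    congr 1; ext v; simp [hl]
  obtain ⟨Q, hc, hd, hv, hp⟩ :=
    exists_paths_of_list w (Fintype.card V / 3) l (by rw [hlen, Nat.mul_div_cancel' h3]) hn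
  rw [← hp]
  exact hP.2 Q ⟨hc, hd, fun v => (hv v).2 (hl v)⟩

/-- A maximum-weight packing has at least two thirds of the weight of a Hamiltonian path. -/
lemma two_mul_walkWt_le_of_isMaxPacking {w : Sym2 V → ℝ} (hw : ∀ e, 0 ≤ w e) {P : Finset (P3 V)}
    (hP : IsMaxPacking w P) (h3 : 3 ∣ Fintype.card V) {l : List V} (hn : l.Nodup)
    (hl : ∀ v, v ∈ l) : 2 * walkWt w l ≤ 3 * pw w P := by
  have hlen : l.length = Fintype.card V := by
    rw [← List.toFinset_card_of_nodup hn, ← Finset.card_univ]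
    congr 1; ext v; simp [hl]
  have key := fun {l' : List V} (h : l'.Perm l) =>
    tripleWt_le_of_isMaxPacking hP h3 (h.nodup_iff.2 hn) fun v => h.mem_iff.2 (hl v)
  match l, hlen with
  | [], _ => simpa [walkWt, tripleWt] using key (List.Perm.refl _)
  | [_], hlen => simp at hlen; omega
  | [_, _], hlen => simp at hlen; omega
  | a :: b :: c :: l, hlen =>
    obtain ⟨k, hk⟩ : 3 ∣ l.length := by simp at hlen; omega
    have h₀ := key (List.Perm.refl _)
    have h₁ := key (List.perm_append_singleton a (b :: c :: l))
    have h₂ := key (List.perm_append_comm (l₁ := c :: l) (l₂ := [a, b]))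
    have := two_mul_walkWt_le_tripleWt hw a b k a b c l hk
    simp only [List.cons_append] at h₁ h₂
    linarith

lemma exists_lists_of_isMatching (w : Sym2 V → ℝ) {N : Finset (Sym2 V)} (hN : IsMatching N)
    (hc : 2 * N.card = Fintype.card V) :
    ∃ L : List (List V), L.flatten.Nodup ∧ (∀ v, ∃ A ∈ L, IsEnd v A) ∧
      (L.map (walkWt w)).sum = ew w N := by
  let f : Sym2 V → List V := fun e => [e.out.1, e.out.2]
  have hout : ∀ e : Sym2 V, s(e.out.1, e.out.2) = e := fun e => Quot.out_eq e
  have hf : ∀ (e : Sym2 V) v, v ∈ f e ↔ v ∈ e := by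
    intro e v
    conv_rhs => rw [← hout e]
    simp [f]
  have hnd : (N.toList.map f).flatten.Nodup := by
    rw [List.nodup_flatten]
    constructor
    · intro A hA
      obtain ⟨e, he, rfl⟩ := List.mem_map.1 hA
      have h := hN.1 e (Finset.mem_toList.1 he)
      rw [← hout e, Sym2.mk_isDiag_iff] at h
      simpa [f] using h
    · rw [List.pairwise_map]
      refine List.Pairwise.imp_of_mem ?_ N.nodup_toList
      intro e e' he he' hne v hv hv'
      exact hN.2 e (Finset.mem_toList.1 he) e' (Finset.mem_toList.1 he') hne v
        ((hf _ _).1 hv) ((hf _ _).1 hv')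
  have hlen : (N.toList.map f).flatten.length = Fintype.card V := by
    simp [List.length_flatten, Function.comp_def, f]
    omega
  refine ⟨N.toList.map f, hnd, ?_, ?_⟩
  · intro v
    have huniv : (N.toList.map f).flatten.toFinset = Finset.univ :=
      Finset.eq_univ_of_card _ (by rw [List.toFinset_card_of_nodup hnd, hlen])
    have hv : v ∈ (N.toList.map f).flatten := by
      rw [← List.mem_toFinset, huniv]; exact Finset.mem_univ v
    obtain ⟨A, hA, hvA⟩ := List.mem_flatten.1 hv
    refine ⟨A, hA, ?_⟩
    obtain ⟨e, -, rfl⟩ := List.mem_map.1 hA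
    simpa [f, IsEnd, eq_comm] using hvA
  · rw [List.map_map, ew, ← Finset.sum_map_toList]
    congr 1
    refine List.map_congr_left fun e _ => ?_
    simp [f, walkWt, hout]

/-- Greedily joining the edges of `N` along one edge of each 3-path of `S`: the vertices of the
3-paths not yet treated are ends, and no list has three ends. -/
lemma exists_lists_of_paths (w : Sym2 V → ℝ) {N : Finset (Sym2 V)} (hN : IsMatching N)
    (hc : 2 * N.card = Fintype.card V) {P : Finset (P3 V)}
    (hP : ∀ p ∈ P, ∀ q ∈ P, p ≠ q → Disjoint p.verts q.verts) (S : Finset (P3 V)) (hS : S ⊆ P) :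
    ∃ L : List (List V), L.flatten.Nodup ∧ (∀ v, v ∈ L.flatten) ∧
      (∀ p ∈ P, p ∉ S → ∀ v ∈ p.verts, ∃ A ∈ L, IsEnd v A) ∧
      ew w N + ∑ p ∈ S, min (w s(p.x, p.y)) (w s(p.y, p.z)) ≤ (L.map (walkWt w)).sum := by
  induction S using Finset.induction_on with
  | empty =>
    obtain ⟨L, hnd, hend, hL⟩ := exists_lists_of_isMatching w hN hc
    refine ⟨L, hnd, fun v => ?_, fun _ _ _ v _ => hend v, by simp [hL]⟩
    obtain ⟨A, hA, hv⟩ := hend v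
    exact List.mem_flatten.2 ⟨A, hA, hv.mem⟩
  | insert p S hpS ih =>
    obtain ⟨L, hnd, hall, hend, hL⟩ := ih ((Finset.subset_insert p S).trans hS)
    have hpP : p ∈ P := hS (Finset.mem_insert_self p S)
    have hxm : p.x ∈ p.verts := by simp [P3.verts]
    have hym : p.y ∈ p.verts := by simp [P3.verts]
    have hzm : p.z ∈ p.verts := by simp [P3.verts]
    have main : ∃ u ∈ p.verts, ∃ v ∈ p.verts,
        min (w s(p.x, p.y)) (w s(p.y, p.z)) ≤ w s(u, v) ∧
        ∃ A ∈ L, ∃ B ∈ L, A ≠ B ∧ IsEnd u A ∧ IsEnd v B := by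
      obtain ⟨A, hA, hxA⟩ := hend p hpP hpS _ hxm
      obtain ⟨B, hB, hyB⟩ := hend p hpP hpS _ hym
      obtain ⟨C, hC, hzC⟩ := hend p hpP hpS _ hzm
      by_cases hAB : A = B
      · refine ⟨p.y, hym, p.z, hzm, min_le_right _ _, B, hB, C, hC, ?_, hyB, hzC⟩
        rintro rfl
        subst hAB
        rcases hxA.eq_or_eq_or_eq hyB hzC with h | h | h
        exacts [p.hxy h, p.hyz h, p.hxz h]
      · exact ⟨p.x, hxm, p.y, hym, min_le_left _ _, A, hA, B, hB, hAB, hxA, hyB⟩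
    obtain ⟨u, hu, v, hv, hmin, A, hA, B, hB, hAB, huA, hvB⟩ := main
    obtain ⟨L', hperm, hsum, hend'⟩ := exists_join_of_mem w hA hB hAB huA hvB
    refine ⟨L', hperm.nodup_iff.2 hnd, fun t => hperm.mem_iff.2 (hall t), ?_, ?_⟩
    · intro q hq hqS t ht
      rw [Finset.mem_insert, not_or] at hqS
      have hdis := Finset.disjoint_left.1 (hP q hq p hpP hqS.1) ht
      exact hend' t (fun h => hdis (h ▸ hu)) (fun h => hdis (h ▸ hv)) (hend q hq hqS.2 t ht)
    · rw [Finset.sum_insert hpS, hsum]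
      linarith

theorem statement_4 (n : ℕ) (hn : Fintype.card V = n) (h3 : 3 ∣ n) (h2 : 2 ∣ n)
    (w : Sym2 V → ℝ) (hw : ∀ e : Sym2 V, 0 ≤ w e)
    (Pstar : Finset (P3 V)) (hP : IsMaxPacking w Pstar)
    (N : Finset (Sym2 V)) (hN : IsMaxMatchingOfSize w (n / 2) N) :
    ∃ P : Finset (P3 V), IsPacking P ∧
      (2 / 3 : ℝ) * ew w N + (1 / 2 : ℝ) * pw w Pstar - (1 / 2 : ℝ) * maxSum w Pstar ≤ pw w P ∧
      (7 / 12 : ℝ) * pw w Pstar ≤ pw w P := by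
  subst hn
  have hcN : 2 * N.card = Fintype.card V := by rw [hN.2.1, Nat.mul_div_cancel' h2]
  obtain ⟨L, hnd, hall, -, hL⟩ :=
    exists_lists_of_paths w hN.1 hcN hP.1.2.1 Pstar (Finset.Subset.refl _)
  have hham := two_mul_walkWt_le_of_isMaxPacking hw hP h3 hnd hall
  have hflat := sum_walkWt_le_flatten hw L
  have hsplit : pw w Pstar =
      maxSum w Pstar + ∑ p ∈ Pstar, min (w s(p.x, p.y)) (w s(p.y, p.z)) := by
    rw [pw, maxSum, ← Finset.sum_add_distrib]
    exact Finset.sum_congr rfl fun p _ => (max_add_min _ _).symm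
  have hmin : 0 ≤ ∑ p ∈ Pstar, min (w s(p.x, p.y)) (w s(p.y, p.z)) :=
    Finset.sum_nonneg fun p _ => le_min (hw _) (hw _)
  have hpw : 0 ≤ pw w Pstar := Finset.sum_nonneg fun p _ => add_nonneg (hw _) (hw _)
  refine ⟨Pstar, hP.1, ?_, ?_⟩ <;> linarith

end MW3PP
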